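/- arXiv:1509.08053 — 2 statements merged into one kernel-verified Lean document; each statement's English description precedes it below -/
import Mathlib

section
/- Let F_q be a finite field, 1 ≤ k < n, A ∈ M_k(F_q) and C ∈ M_{n−k,k}(F_q). There exist B ∈ M_{k,n−k}(F_q) and D ∈ M_{n−k}(F_q) such that the block matrix [A B; C D] ∈ M_n(F_q) has irreducible characteristic polynomial if and only if the n × k polynomial matrix [xI_k − A; −C] (with top block xI_k − A and bottom block −C) is unimodular over F_q[x]. -/
/-- An `m × k` polynomial matrix (with `#m ≥ k`) is *unimodular* if every common divisor
of its `k × k` minors is a unit (equivalently, all its invariant factors equal `1`). -/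
def Matrix.Unimodular {F : Type*} [Field F] {m : Type*} [Fintype m] [DecidableEq m] {k : ℕ}
    (M : Matrix m (Fin k) (Polynomial F)) : Prop :=
  ∀ g : Polynomial F,
    (∀ f : Fin k → m, Function.Injective f → g ∣ (M.submatrix f id).det) → IsUnit g

/-- The `(k + r) × k` polynomial matrix `[xI_k − A; −C]`. -/
noncomputable def xIminusAC {F : Type*} [Field F] {k r : ℕ} (A : Matrix (Fin k) (Fin k) F)
    (C : Matrix (Fin r) (Fin k) F) : Matrix (Fin k ⊕ Fin r) (Fin k) (Polynomial F) :=
  Matrix.of fun i j =>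
    Sum.elim (fun i' => (if i' = j then Polynomial.X else 0) - Polynomial.C (A i' j))
      (fun i'' => - Polynomial.C (C i'' j)) i

open Polynomial in
lemma aux_exists_ker {K m : Type*} [Field K] [Fintype m] [DecidableEq m] {k : ℕ}
    (M : Matrix m (Fin k) K)
    (h : ∀ f : Fin k → m, Function.Injective f → (M.submatrix f id).det = 0) :
    ∃ v : Fin k → K, v ≠ 0 ∧ M.mulVec v = 0 := by
  by_contra hcon
  push Not at hcon
  have hinj : Function.Injective M.mulVecLin := by
    rw [injective_iff_map_eq_zero]
    intro v hv
    by_contra hv0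
    exact hcon v hv0 (by simpa using hv)
  have hr : M.rank = k := by
    rw [Matrix.rank, LinearMap.finrank_range_of_inj hinj]; simp
  rw [Matrix.rank_eq_finrank_span_row] at hr
  obtain ⟨f, hf, -, hli⟩ := Submodule.exists_fun_fin_finrank_span_eq K (Set.range M.row)
  choose g hg using hf
  let e : Fin k → Fin (Module.finrank K (Submodule.span K (Set.range M.row))) := Fin.cast hr.symm
  have he : Function.Injective e := Fin.cast_injective _
  have hli2 : LinearIndependent K (M.submatrix (g ∘ e) id).row := by
    have : (M.submatrix (g ∘ e) id).row = f ∘ e := by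
      ext i j
      exact congrFun (hg (e i)) j
    rw [this]
    exact hli.comp e he
  have hgi : Function.Injective (g ∘ e) := by
    intro a b hab
    apply he
    apply hli.injective
    rw [← hg, ← hg]
    exact congrArg M.row hab
  have := h _ hgi
  rw [Matrix.linearIndependent_rows_iff_isUnit, Matrix.isUnit_iff_isUnit_det, this] at hli2
  simp at hli2

open Polynomial in
lemma aux_charmatrix {F : Type*} [Field F] {k r : ℕ}
    (A : Matrix (Fin k) (Fin k) F) (C : Matrix (Fin r) (Fin k) F)
    (B : Matrix (Fin k) (Fin r) F) (D : Matrix (Fin r) (Fin r) F) (i : Fin k ⊕ Fin r) (j : Fin k) :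
    (Matrix.fromBlocks A B C D).charmatrix i (Sum.inl j) = xIminusAC A C i j := by
  rcases i with i | i
  · simp [Matrix.charmatrix, xIminusAC, Matrix.diagonal_apply]
  · simp [Matrix.charmatrix, xIminusAC, Matrix.diagonal_apply]

open Polynomial in
lemma aux_top {F : Type*} [Field F] {k r : ℕ}
    (A : Matrix (Fin k) (Fin k) F) (C : Matrix (Fin r) (Fin k) F) :
    ((xIminusAC A C).submatrix Sum.inl id).det = A.charpoly := by
  rw [Matrix.charpoly]
  apply congrArg Matrix.det
  refine Matrix.ext fun i j => ?_
  simp [Matrix.charmatrix, xIminusAC, Matrix.diagonal_apply]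

open Polynomial in
lemma aux_forward {F : Type*} [Field F] {k r : ℕ} (hr : 0 < r)
    (A : Matrix (Fin k) (Fin k) F) (C : Matrix (Fin r) (Fin k) F)
    (B : Matrix (Fin k) (Fin r) F) (D : Matrix (Fin r) (Fin r) F)
    (h : Irreducible (Matrix.fromBlocks A B C D).charpoly) : (xIminusAC A C).Unimodular := by
  intro g hg
  by_contra hu
  obtain ⟨p, hp, hpg⟩ := WfDvdMonoid.exists_irreducible_factor hu (by
    rintro rfl
    have := hg Sum.inl Sum.inl_injective
    rw [aux_top, zero_dvd_iff] at this
    exact A.charpoly_monic.ne_zero this)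
  have : Fact (Irreducible p) := ⟨hp⟩
  obtain ⟨v, hv0, hv⟩ := aux_exists_ker ((xIminusAC A C).map (AdjoinRoot.mk p)) (by
    intro f hf
    have h1 := hpg.trans (hg f hf)
    rw [← AdjoinRoot.mk_eq_zero, RingHom.map_det] at h1
    exact h1)
  have hdet : ((Matrix.fromBlocks A B C D).charmatrix.map (AdjoinRoot.mk p)).det = 0 := by
    rw [← Matrix.exists_mulVec_eq_zero_iff]
    refine ⟨Sum.elim v 0, ?_, ?_⟩
    · intro h0
      apply hv0
      ext j
      exact congrFun h0 (Sum.inl j)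
    · ext i
      have := congrFun hv i
      simpa [Matrix.mulVec, dotProduct, aux_charmatrix] using this
  have hdvd : p ∣ (Matrix.fromBlocks A B C D).charpoly := by
    rw [← AdjoinRoot.mk_eq_zero, Matrix.charpoly, RingHom.map_det]
    exact hdet
  have hass := (hp.associated_of_dvd h hdvd)
  have h2 : (Matrix.fromBlocks A B C D).charpoly ∣ A.charpoly := by
    rw [← aux_top A C]
    exact hass.symm.dvd.trans (hpg.trans (hg _ Sum.inl_injective))
  have h3 := natDegree_le_of_dvd h2 A.charpoly_monic.ne_zero
  rw [Matrix.charpoly_natDegree_eq_dim, Matrix.charpoly_natDegree_eq_dim] at h3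
  simp at h3
  omega

open Polynomial in
lemma aux_horner {F : Type*} [Field F] {k r : ℕ}
    (A : Matrix (Fin k) (Fin k) F) (C : Matrix (Fin r) (Fin k) F) (w : Fin k → F)
    (hw : ∀ i < k, C.mulVec ((A ^ i).mulVec w) = 0) (m : ℕ) (hm : m ≤ k) :
    ∃ s : Fin k → F[X], (∀ j, s j ∈ degreeLT F m) ∧
      (xIminusAC A C).mulVec s = Sum.elim
        (fun j => X ^ m * Polynomial.C (w j) - Polynomial.C ((A ^ m).mulVec w j)) 0 := by
  induction m with
  | zero =>
    refine ⟨0, fun j => Submodule.zero_mem _, ?_⟩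
    ext1 i
    rcases i with i | i <;> simp
  | succ m ih =>
    obtain ⟨s, hs, hs2⟩ := ih (by omega)
    let t : Fin k → F[X] := fun j => Polynomial.C ((A ^ m).mulVec w j)
    refine ⟨(X : F[X]) • s + t, ?_, ?_⟩
    · intro j
      rw [Pi.add_apply, Pi.smul_apply, smul_eq_mul]
      refine Submodule.add_mem _ ?_ ?_
      · have := hs j
        rw [mem_degreeLT] at this ⊢
        rw [mul_comm, degree_mul, degree_X]
        push_cast
        exact WithBot.add_lt_add_right (by simp) this
      · rw [mem_degreeLT]
        refine lt_of_le_of_lt degree_C_le ?_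
        exact_mod_cast Nat.succ_pos m
    · rw [Matrix.mulVec_add, Matrix.mulVec_smul, hs2]
      ext1 i
      rcases i with i | i
      · have h1 : (A ^ (m+1)).mulVec w i = ∑ l, A i l * (A ^ m).mulVec w l := by
          rw [pow_succ', ← Matrix.mulVec_mulVec]; rfl
        have h2 : (xIminusAC A C).mulVec t (Sum.inl i) =
            X * t i - ∑ l, Polynomial.C (A i l) * t l := by
          simp [Matrix.mulVec, dotProduct, xIminusAC, sub_mul, Finset.sum_sub_distrib]
        rw [Pi.add_apply, h2]
        simp only [Sum.elim_inl, Pi.smul_apply, smul_eq_mul, h1, map_sum, map_mul, t]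
        ring
      · have h1 := congrFun (hw m (by omega)) i
        have h2 : (xIminusAC A C).mulVec t (Sum.inr i) =
            - Polynomial.C (C.mulVec ((A ^ m).mulVec w) i) := by
          simp [Matrix.mulVec, dotProduct, xIminusAC, t]
        rw [Pi.add_apply, h2, h1]
        simp

open Polynomial in
lemma aux_obs {F : Type*} [Field F] {k r : ℕ}
    (A : Matrix (Fin k) (Fin k) F) (C : Matrix (Fin r) (Fin k) F)
    (hM : (xIminusAC A C).Unimodular) (w : Fin k → F)
    (hw : ∀ i < k, C.mulVec ((A ^ i).mulVec w) = 0) : w = 0 := by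
  by_contra hw0
  have H : ∀ m : Fin (k+1), _ := fun m => aux_horner A C w hw m (by omega)
  choose s hs hs2 using H
  let χ := A.charpoly
  let v : Fin k → F[X] := ∑ m : Fin (k+1), Polynomial.C (χ.coeff m) • s m
  have hχd : χ.natDegree = k := by simp [χ, Matrix.charpoly_natDegree_eq_dim]
  have hχ0 : χ ≠ 0 := A.charpoly_monic.ne_zero
  have hvd : ∀ j, (v j).degree < k := by
    intro j
    rw [← mem_degreeLT]
    simp only [v, Finset.sum_apply, Pi.smul_apply, smul_eq_mul]
    refine Submodule.sum_mem _ fun m _ => ?_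
    rw [← smul_eq_C_mul]
    exact Submodule.smul_mem _ _ (degreeLT_mono (by omega) (hs m j))
  let u : Fin k ⊕ Fin r → F[X] := Sum.elim (fun j => Polynomial.C (w j)) 0
  have hv : (xIminusAC A C).mulVec v = χ • u := by
    simp only [v, Matrix.mulVec_sum, Matrix.mulVec_smul, hs2]
    ext1 i
    rcases i with i | i
    · simp only [Finset.sum_apply, Pi.smul_apply, smul_eq_mul, Sum.elim_inl, u, mul_sub,
        Finset.sum_sub_distrib]
      have h1 : ∑ m : Fin (k+1), Polynomial.C (χ.coeff m) *
          Polynomial.C ((A ^ (m : ℕ)).mulVec w i) = 0 := by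
        have hc : aeval A χ = 0 := Matrix.aeval_self_charpoly A
        rw [aeval_eq_sum_range, hχd, Finset.sum_range] at hc
        have := congrFun (congrArg (fun N : Matrix (Fin k) (Fin k) F => N.mulVec w) hc) i
        simp only [Matrix.sum_mulVec, Matrix.smul_mulVec, Finset.sum_apply, Pi.smul_apply,
          smul_eq_mul, Matrix.zero_mulVec, Pi.zero_apply] at this
        simp only [← map_mul, ← map_sum, this, map_zero]
      rw [h1, sub_zero]
      conv_rhs => rw [χ.as_sum_range_C_mul_X_pow, hχd, Finset.sum_range, Finset.sum_mul]
      simp only [mul_assoc]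
    · simp [u]
  have hv0 : v ≠ 0 := by
    intro h0
    apply hw0
    ext j
    rw [h0, Matrix.mulVec_zero] at hv
    have := congrFun hv (Sum.inl j)
    simpa [u, hχ0] using this
  obtain ⟨j, hj⟩ := Function.ne_iff.mp hv0
  let I : Ideal F[X] := Submodule.comap (LinearMap.mulRight F[X] (v j)) (Ideal.span {χ})
  have hI : ∀ g, g ∈ I ↔ χ ∣ g * v j := by
    intro g
    change g * v j ∈ Ideal.span {χ} ↔ _
    rw [Ideal.mem_span_singleton]
  have hun := hM (Submodule.IsPrincipal.generator I) (by
    intro f hf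
    rw [← Submodule.IsPrincipal.mem_iff_generator_dvd, hI]
    let N := (xIminusAC A C).submatrix f id
    have h1 : N.mulVec v = χ • (u ∘ f) := by
      ext1 i
      exact congrFun hv (f i)
    have h2 := congrArg (fun x => N.adjugate.mulVec x) h1
    simp only [Matrix.mulVec_mulVec, Matrix.adjugate_mul, Matrix.smul_mulVec, Matrix.one_mulVec,
      Matrix.mulVec_smul] at h2
    have h3 := congrFun h2 j
    exact ⟨_, h3⟩)
  have h1 : (1 : F[X]) ∈ I := by
    rw [Submodule.IsPrincipal.mem_iff_generator_dvd]
    exact hun.dvd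
  rw [hI, one_mul] at h1
  have := degree_le_of_dvd h1 hj
  rw [degree_eq_natDegree hχ0, hχd] at this
  exact absurd (hvd j) (not_lt.mpr this)

lemma aux_count {F L ι : Type*} [Field F] [Field L] [Algebra F L] [Finite F] [Finite L]
    [Fintype ι] (hcard : Nat.card (ι → F) = Nat.card L) (K : Submodule L (ι → L))
    (hK : ∀ c : ι → F, c ≠ 0 → ∃ z ∈ K, ∑ i, c i • z i ≠ 0) :
    ∃ z ∈ K, LinearIndependent F z := by
  classical
  by_contra hcon
  push Not at hcon
  have := Fintype.ofFinite F
  have := Fintype.ofFinite L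
  have hz : ∀ z : K, ∃ c : {c : ι → F // c ≠ 0}, ∑ i, c.1 i • z.1 i = 0 := by
    intro z
    have := hcon z.1 z.2
    rw [Fintype.not_linearIndependent_iff] at this
    obtain ⟨g, hg, i, hi⟩ := this
    exact ⟨⟨g, fun h => hi (congrFun h i)⟩, hg⟩
  let φ : (ι → F) → (K →ₗ[L] L) := fun c =>
    (∑ i, algebraMap F L (c i) • (LinearMap.proj i : (ι → L) →ₗ[L] L)).comp K.subtype
  have hφ : ∀ c z, φ c z = ∑ i, c i • z.1 i := by
    intro c z
    simp [φ, Algebra.smul_def]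
  have hker : ∀ c : {c : ι → F // c ≠ 0},
      Nat.card L * Nat.card (LinearMap.ker (φ c.1)) = Nat.card K := by
    intro c
    obtain ⟨z, hzK, hz⟩ := hK c.1 c.2
    have hs : Function.Surjective (φ c.1) := by
      apply LinearMap.surjective
      intro h0
      apply hz
      rw [← hφ c.1 ⟨z, hzK⟩, h0]; rfl
    rw [Submodule.card_eq_card_quotient_mul_card (LinearMap.ker (φ c.1)), mul_comm]
    rw [Nat.card_congr ((φ c.1).quotKerEquivOfSurjective hs).toEquiv]
    try ring
  choose c hc using hz
  let g : K → Σ c : {c : ι → F // c ≠ 0}, LinearMap.ker (φ c.1) :=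
    fun z => ⟨c z, z, by rw [LinearMap.mem_ker, hφ]; exact hc z⟩
  have hg : Function.Injective g := by
    intro a b hab
    have : ((g a).2 : K) = ((g b).2 : K) := by rw [hab]
    exact this
  have h1 := Nat.card_le_card_of_injective g hg
  rw [Nat.card_sigma] at h1
  have h2 := Nat.mul_le_mul_left (Nat.card L) h1
  rw [Finset.mul_sum, Finset.sum_congr rfl (fun c _ => hker c)] at h2
  rw [Finset.sum_const, smul_eq_mul] at h2
  have hKpos : 0 < Nat.card K := Nat.card_pos
  have h3 := Nat.le_of_mul_le_mul_right h2 hKpos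
  rw [← hcard, Finset.card_univ, Nat.card_eq_fintype_card] at h3
  have h4 : Fintype.card {c : ι → F // c ≠ 0} < Fintype.card (ι → F) :=
    Fintype.card_subtype_lt (x := 0) (by simp)
  omega

lemma aux_key {F L : Type*} [Field F] [Field L] [Algebra F L] {k r : ℕ} (hr : 0 < r)
    (pb : PowerBasis F L) (hpb : pb.dim = k + r)
    (A : Matrix (Fin k) (Fin k) F) (C : Matrix (Fin r) (Fin k) F)
    (hobs : ∀ w : Fin k → F, (∀ i < k, C.mulVec ((A ^ i).mulVec w) = 0) → w = 0)
    (v : Fin k → L) (c : Fin k ⊕ Fin r → F)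
    (h1 : ∀ i, pb.gen * v i = ∑ j, A i j • v j + c (Sum.inl i) • 1)
    (h2 : ∀ i, - ∑ j, C i j • v j = c (Sum.inr i) • 1) : c = 0 := by
  let ℓ : L →ₗ[F] F := pb.basis.coord ⟨k + r - 1, by omega⟩
  have hℓ : ∀ i < k + r, ℓ (pb.gen ^ i) = if i = k + r - 1 then 1 else 0 := by
    intro i hi
    have : pb.gen ^ i = pb.basis ⟨i, by omega⟩ := by simp
    rw [this, Module.Basis.coord_apply, Module.Basis.repr_self, Finsupp.single_apply]
    simp
  let w : Fin k → F := fun j => ℓ (v j)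
  have hpow : ∀ i ≤ k + r - 1, ∀ j, ℓ (pb.gen ^ i * v j) = (A ^ i).mulVec w j := by
    intro i
    induction i with
    | zero => intro _ j; simp [w]
    | succ i ih =>
      intro hi j
      rw [pow_succ, mul_assoc, h1, pow_succ', ← Matrix.mulVec_mulVec, mul_add, map_add,
        Finset.mul_sum, map_sum]
      simp only [mul_smul_comm, map_smul, mul_one]
      rw [hℓ i (by omega), if_neg (by omega)]
      simp only [ih (by omega)]
      simp [Matrix.mulVec, dotProduct]
  have hw : w = 0 := by
    apply hobs
    intro i hi
    ext j
    have h3 := congrArg (fun x => ℓ (pb.gen ^ i * x)) (h2 j)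
    simp only [mul_neg, Finset.mul_sum, map_neg, map_sum, mul_smul_comm, map_smul, mul_one] at h3
    rw [hℓ i (by omega), if_neg (by omega)] at h3
    simp only [hpow i (by omega)] at h3
    simpa [Matrix.mulVec, dotProduct] using h3
  have hv : ∀ j, v j = 0 := by
    intro j
    by_contra hj
    have h0 : (ℓ.comp (LinearMap.mulRight F (v j))) = 0 := by
      apply pb.basis.ext
      intro i
      have := i.2
      simp [hpow i (by omega), hw]
    have h3 := LinearMap.congr_fun h0 (pb.gen ^ (k + r - 1) * (v j)⁻¹)
    simp [hj, hℓ (k + r - 1) (by omega)] at h3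
  ext i
  rcases i with i | i
  · have := h1 i
    simpa [hv] using this.symm
  · have := h2 i
    simpa [hv] using this.symm

lemma aux_backward {F L : Type*} [Field F] [Finite F] [Field L] [Algebra F L] {k r : ℕ}
    (hr : 0 < r) (pb : PowerBasis F L) (hpb : pb.dim = k + r)
    (A : Matrix (Fin k) (Fin k) F) (C : Matrix (Fin r) (Fin k) F)
    (hobs : ∀ w : Fin k → F, (∀ i < k, C.mulVec ((A ^ i).mulVec w) = 0) → w = 0) :
    ∃ (B : Matrix (Fin k) (Fin r) F) (D : Matrix (Fin r) (Fin r) F),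
        Irreducible (Matrix.fromBlocks A B C D).charpoly := by
  classical
  have : Module.Finite F L := pb.finite
  have : Finite L := Module.finite_of_finite F
  have hfr : Module.finrank F L = k + r := by rw [pb.finrank, hpb]
  -- the functionals given by the columns
  let ψ : Fin k → ((Fin k ⊕ Fin r → L) →ₗ[L] L) := fun j =>
    pb.gen • LinearMap.proj (Sum.inl j)
      - ∑ i, algebraMap F L (A i j) • LinearMap.proj (Sum.inl i)
      - ∑ i, algebraMap F L (C i j) • LinearMap.proj (Sum.inr i)
  have hψ : ∀ j z, ψ j z = pb.gen * z (Sum.inl j) - ∑ i, A i j • z (Sum.inl i)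
      - ∑ i, C i j • z (Sum.inr i) := by
    intro j z
    simp [ψ, Algebra.smul_def]
  obtain ⟨z, hzK, hz⟩ := aux_count (F := F) (L := L) (ι := Fin k ⊕ Fin r)
    (by
      rw [Module.natCard_eq_pow_finrank (K := F) (V := L), hfr, Nat.card_fun]
      simp)
    (⨅ j, LinearMap.ker (ψ j)) (by
      intro c hc
      by_contra hcon
      push Not at hcon
      apply hc
      let κ : (Fin k ⊕ Fin r → L) →ₗ[L] L := ∑ i, algebraMap F L (c i) • LinearMap.proj i
      have hκ : κ ∈ Submodule.span L (Set.range ψ) := by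
        apply mem_span_of_iInf_ker_le_ker
        intro z hz
        have := hcon z hz
        rw [LinearMap.mem_ker]
        rw [← this]
        simp [κ, Algebra.smul_def]
      rw [Submodule.mem_span_range_iff_exists_fun] at hκ
      obtain ⟨v, hv⟩ := hκ
      have hev : ∀ z, ∑ j, v j * ψ j z = ∑ i, c i • z i := by
        intro z
        have := LinearMap.congr_fun hv z
        simpa [κ, Algebra.smul_def, -Fintype.sum_sum_type] using this
      apply aux_key hr pb hpb A C hobs v c
      · intro i
        have := hev (Pi.single (Sum.inl i) 1)
        simp [hψ, Pi.single_apply, mul_sub, Finset.sum_sub_distrib] at this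
        rw [← this, mul_comm]
        simp [mul_comm]
      · intro i
        have := hev (Pi.single (Sum.inr i) 1)
        simp [hψ, Pi.single_apply, mul_sub, Finset.sum_sub_distrib] at this
        rw [← this])
  rw [Submodule.mem_iInf] at hzK
  have hrel : ∀ j, pb.gen * z (Sum.inl j) = ∑ i, A i j • z (Sum.inl i)
      + ∑ i, C i j • z (Sum.inr i) := by
    intro j
    have := hzK j
    rw [LinearMap.mem_ker, hψ] at this
    linear_combination this
  let b := basisOfLinearIndependentOfCardEqFinrank' z hz (by simp [hfr])
  have hb : ∀ i, b i = z i := by intro i; simp [b]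
  let T := Algebra.leftMulMatrix b pb.gen
  have hcol : ∀ i j, T i (Sum.inl j) = Sum.elim (fun i => A i j) (fun i => C i j) i := by
    intro i j
    have h1 : pb.gen * b (Sum.inl j) = ∑ i, Sum.elim (fun i => A i j) (fun i => C i j) i • b i := by
      rw [hb, hrel]
      simp [hb]
    have h2 : T i (Sum.inl j) = b.repr (pb.gen * b (Sum.inl j)) i :=
      Algebra.leftMulMatrix_eq_repr_mul b _ _ _
    rw [h2, h1, b.repr_sum_self]
  refine ⟨T.toBlocks₁₂, T.toBlocks₂₂, ?_⟩
  have hT : Matrix.fromBlocks A T.toBlocks₁₂ C T.toBlocks₂₂ = T := by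
    have h11 : T.toBlocks₁₁ = A := by ext i j; exact hcol (Sum.inl i) j
    have h21 : T.toBlocks₂₁ = C := by ext i j; exact hcol (Sum.inr i) j
    conv_rhs => rw [← Matrix.fromBlocks_toBlocks T, h11, h21]
  rw [hT]
  have hch : T.charpoly = minpoly F pb.gen := by
    rw [← charpoly_leftMulMatrix pb]
    simp only [T, Algebra.leftMulMatrix_apply, LinearMap.charpoly_toMatrix]
  rw [hch]
  exact minpoly.irreducible pb.isIntegral_gen

theorem irreducible_charpoly_completion_iff_unimodular
    {F : Type*} [Field F] [Fintype F] (n k : ℕ) (hk : 1 ≤ k) (hkn : k < n)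
    (A : Matrix (Fin k) (Fin k) F) (C : Matrix (Fin (n - k)) (Fin k) F) :
    (∃ (B : Matrix (Fin k) (Fin (n - k)) F) (D : Matrix (Fin (n - k)) (Fin (n - k)) F),
        Irreducible (Matrix.fromBlocks A B C D).charpoly) ↔
      (xIminusAC A C).Unimodular := by
  constructor
  · rintro ⟨B, D, h⟩
    exact aux_forward (by omega) A C B D h
  · intro h
    obtain ⟨p, hp⟩ := CharP.exists F
    have hpp : Fact p.Prime := ⟨CharP.char_is_prime F p⟩
    have : NeZero n := ⟨by omega⟩
    let pb := Field.powerBasisOfFiniteOfSeparable F (FiniteField.Extension F p n)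
    refine aux_backward (by omega) pb ?_ A C (aux_obs A C h)
    rw [← pb.finrank, FiniteField.finrank_extension]
    omega
end

section
/- (Wimmer) Let F be an arbitrary field, 1 ≤ k < n, A ∈ M_k(F), C ∈ M_{n−k,k}(F), and let f ∈ F[x] be a monic polynomial of degree n. There exist B ∈ M_{k,n−k}(F) and D ∈ M_{n−k}(F) such that the block matrix [A B; C D] has characteristic polynomial f if and only if every polynomial g ∈ F[x] that divides the determinant of every k × k submatrix of the n × k polynomial matrix [xI_k − A; −C] also divides f. -/
namespace WimmerAux
open Polynomial

theorem laplace_dvd {R : Type*} [CommRing R] (g : R) (k r : ℕ)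
    (N : Matrix (Fin (k + r)) (Fin (k + r)) R)
    (h : ∀ e : Fin k → Fin (k + r), Function.Injective e →
      g ∣ (N.submatrix e (Fin.castAdd r)).det) : g ∣ N.det := by
  induction r with
  | zero => simpa using h id Function.injective_id
  | succ r ih =>
    change Matrix (Fin (k + r).succ) (Fin (k + r).succ) R at N
    rw [Matrix.det_succ_column N (Fin.last _)]
    refine Finset.dvd_sum fun i _ => Dvd.dvd.mul_left (ih _ fun e he => ?_) _
    have := h (fun j => i.succAbove (e j)) (fun a b hab => he (Fin.succAbove_right_injective hab))
    convert this using 2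
    ext a b
    simp only [Matrix.submatrix_apply, Fin.succAbove_last]
    rfl

theorem charpoly_mul {R V : Type*} [Field R] [AddCommGroup V]
    [Module R V] [Module.Finite R V] (W : Submodule R V) (e : V →ₗ[R] V) (he : W ≤ W.comap e) :
    e.charpoly = (e.restrict he).charpoly * (W.mapQ W e he).charpoly := by
  classical
  let m := Module.Free.ChooseBasisIndex R W
  let bW : Module.Basis m R W := Module.Free.chooseBasis R W
  let n := Module.Free.ChooseBasisIndex R (V ⧸ W)
  let bQ : Module.Basis n R (V ⧸ W) := Module.Free.chooseBasis R (V ⧸ W)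
  let b := Module.Basis.sumQuot bW bQ
  let A : Matrix m m R := LinearMap.toMatrix bW bW (e.restrict he)
  let B : Matrix m n R := Matrix.of fun i l ↦
    (b.repr (e (b (Sum.inr l)))) (Sum.inl i)
  let D : Matrix n n R := LinearMap.toMatrix bQ bQ (W.mapQ W e he)
  suffices LinearMap.toMatrix b b e = Matrix.fromBlocks A B 0 D by
    rw [← LinearMap.charpoly_toMatrix e b, this, ← LinearMap.charpoly_toMatrix _ bW,
      ← LinearMap.charpoly_toMatrix _ bQ, Matrix.charpoly_fromBlocks_zero₂₁]
  ext u v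
  cases u with
  | inl i =>
    cases v with
    | inl k =>
      simp only [b, Module.Basis.sumQuot_inl, Matrix.fromBlocks_apply₁₁, A,
        LinearMap.toMatrix_apply]
      apply Module.Basis.sumQuot_repr_inl_of_mem
    | inr l => simp [LinearMap.toMatrix_apply, Matrix.fromBlocks_apply₁₂, B]
  | inr j =>
    cases v with
    | inl k =>
      suffices W.mkQ (e (bW k)) = 0 by simp [LinearMap.toMatrix_apply, b, this]
      rw [← LinearMap.mem_ker, Submodule.ker_mkQ]
      exact he (Submodule.coe_mem (bW k))
    | inr l =>
      simp only [LinearMap.toMatrix_apply, Module.Basis.sumQuot_repr_inr,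
        Matrix.fromBlocks_apply₂₂, b, D]
      rw [← Module.Basis.sumQuot_inr bW bQ l, W.mapQ_apply]
      simp

theorem det_dvd {R : Type*} [CommRing R] {m κ : Type*} [Fintype m] [Fintype κ]
    [DecidableEq m] [DecidableEq κ] (E : Matrix m m R) (q : Matrix κ m R) (s : Matrix m κ R)
    (Y : Matrix κ κ R) (S : Matrix κ m R) (hqs : q * s = 1) (h : q * E = Y * S) :
    Y.det ∣ E.det := by
  have hD : (1 + s * ((Y - 1) * q)).det = Y.det := by
    rw [Matrix.det_one_add_mul_comm, Matrix.mul_assoc, hqs]; simp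
  have hE : E = (1 + s * ((Y - 1) * q)) * (E - s * (q * E) + s * S) := by
    have h1 : q * (E - s * (q * E) + s * S) = S := by
      rw [Matrix.mul_add, Matrix.mul_sub, ← Matrix.mul_assoc q s, ← Matrix.mul_assoc q s, hqs]
      simp
    rw [Matrix.add_mul, Matrix.mul_assoc, Matrix.mul_assoc, h1, Matrix.one_mul, Matrix.sub_mul,
      ← h, Matrix.mul_sub, Matrix.one_mul]
    abel
  rw [← hD]
  conv_rhs => rw [hE, Matrix.det_mul]
  exact Dvd.intro _ rfl

theorem placement {F L : Type*} [Field F] [AddCommGroup L] [Module F L] [Module.Finite F L]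
    (S : Module.End F L) (b : L)
    (hb : ∀ p : F[X], p.degree < (Module.finrank F L : ℕ) → aeval S p b = 0 → p = 0)
    (h : F[X]) (hm : h.Monic) (hd : h.natDegree = Module.finrank F L) :
    ∃ S' : Module.End F L, S'.charpoly = h ∧ ∀ v, ∃ t : F, S' v - S v = t • b := by
  set m := Module.finrank F L with hmdef
  set c := S.charpoly with hc
  have hcm : c.Monic := S.charpoly_monic
  have hcd : c.natDegree = m := S.charpoly_natDegree
  have hdeg : h.degree = (m : ℕ) := by rw [degree_eq_natDegree hm.ne_zero, hd]
  have hcdeg : c.degree = (m : ℕ) := by rw [degree_eq_natDegree hcm.ne_zero, hcd]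
  have huniq : ∀ f q r : F[X], r + h * q = f → r.degree < h.degree → f /ₘ h = q :=
    fun f q r h1 h2 => (div_modByMonic_unique q r hm ⟨h1, h2⟩).1
  let J : F[X] →ₗ[F] F[X] :=
    { toFun := fun p => (p * c) /ₘ h
      map_add' := fun p q => by
        refine huniq _ _ ((p * c) %ₘ h + (q * c) %ₘ h) ?_ ?_
        · linear_combination modByMonic_add_div (p * c) h + modByMonic_add_div (q * c) h
        · rw [← add_modByMonic]; exact degree_modByMonic_lt _ hm
      map_smul' := fun t p => by
        refine huniq _ _ (C t * ((p * c) %ₘ h)) ?_ ?_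
        · simp only [smul_eq_C_mul, RingHom.id_apply]
          linear_combination C t * modByMonic_add_div (p * c) h
        · refine lt_of_le_of_lt ?_ (degree_modByMonic_lt (p * c) hm)
          rw [← smul_eq_C_mul]; exact degree_smul_le _ _ }
  have hJ : ∀ p, J p = (p * c) /ₘ h := fun p => rfl
  let Φ : F[X] →ₗ[F] L := (LinearMap.applyₗ b) ∘ₗ (aeval S).toLinearMap ∘ₗ J
  have hΦ : ∀ p, Φ p = aeval S (J p) b := fun p => rfl
  have hcS : aeval S c = 0 := S.aeval_self_charpoly
  have hΦh : ∀ q, Φ (h * q) = 0 := by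
    intro q
    have : J (h * q) = q * c := huniq _ _ 0 (by ring) (by simp [hdeg])
    rw [hΦ, this, map_mul, hcS]; simp
  have hΦ1 : Φ 1 = b := by
    have : J 1 = 1 := by
      refine huniq _ _ (c - h) (by ring) ?_
      rw [hdeg, ← hcdeg]
      exact degree_sub_lt_left (by rw [hdeg, hcdeg]) hcm.ne_zero (by rw [hcm, hm])
    rw [hΦ, this]; simp
  have hinj : ∀ p : F[X], p.degree < (m : ℕ) → Φ p = 0 → p = 0 := by
    intro p hp h0
    by_contra hne
    have h1 : h.degree ≤ (p * c).degree := by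
      rw [degree_mul, hdeg, hcdeg, degree_eq_natDegree hne]
      exact_mod_cast Nat.le_add_left _ _
    have h2 := degree_add_divByMonic hm h1
    have h3 : J p = 0 := by
      apply hb _ _ h0
      rw [hJ]
      by_contra h4
      push Not at h4
      have h5 : ((p * c) /ₘ h) ≠ 0 := by
        rw [Ne, divByMonic_eq_zero_iff hm]; exact not_lt.2 h1
      rw [degree_mul, hdeg, hcdeg, degree_eq_natDegree hne, degree_eq_natDegree h5] at h2
      rw [degree_eq_natDegree hne] at hp
      rw [degree_eq_natDegree h5] at h4
      norm_cast at *
      omega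
    rw [hJ, divByMonic_eq_zero_iff hm] at h3
    exact absurd h1 (not_le.2 h3)
  have hker : ∀ p, Φ p = 0 → h ∣ p := by
    intro p hp
    rw [← modByMonic_eq_zero_iff_dvd hm]
    apply hinj
    · rw [← hdeg]; exact degree_modByMonic_lt _ hm
    · have := modByMonic_add_div p h
      rw [← this, map_add, hΦh, add_zero] at hp
      exact hp
  have hsurj : Function.Surjective Φ := by
    have hfr : Module.finrank F (degreeLT F m) = Module.finrank F L := by
      rw [(degreeLTEquiv F m).finrank_eq]; simp [m]
    have : Module.Finite F (degreeLT F m) := Module.Finite.equiv (degreeLTEquiv F m).symm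
    have h1 : Function.Injective (Φ.domRestrict (degreeLT F m)) := by
      rw [injective_iff_map_eq_zero]
      intro p hp
      exact Subtype.ext (hinj p.1 (mem_degreeLT.1 p.2) hp)
    have h2 := (LinearMap.injective_iff_surjective_of_finrank_eq_finrank hfr).1 h1
    intro v
    obtain ⟨p, hp⟩ := h2 v
    exact ⟨p.1, hp⟩
  obtain ⟨σ, hσ⟩ := Φ.exists_rightInverse_of_surjective (LinearMap.range_eq_top.2 hsurj)
  have hσ' : ∀ v, Φ (σ v) = v := fun v => LinearMap.congr_fun hσ v
  let S' : Module.End F L := Φ ∘ₗ (LinearMap.mulLeft F X) ∘ₗ σ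
  have hS'v : ∀ v, S' v = Φ (X * σ v) := fun v => rfl
  have hS' : ∀ p, S' (Φ p) = Φ (X * p) := by
    intro p
    obtain ⟨q, hq⟩ := hker (σ (Φ p) - p) (by rw [map_sub, hσ', sub_self])
    have : X * σ (Φ p) = X * p + h * (X * q) := by linear_combination X * hq
    rw [hS'v, this, map_add, hΦh, add_zero]
  have hae : ∀ p q, aeval S' p (Φ q) = Φ (p * q) := by
    intro p
    induction p using Polynomial.induction_on' with
    | add p q hp hq => intro r; rw [map_add, LinearMap.add_apply, hp, hq, add_mul, map_add]
    | monomial n a =>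
      intro q
      rw [← C_mul_X_pow_eq_monomial, mul_assoc, ← smul_eq_C_mul, map_smul]
      rw [← smul_eq_C_mul, map_smul, map_pow, aeval_X, LinearMap.smul_apply]
      congr 1
      induction n with
      | zero => simp
      | succ n ih => rw [pow_succ', Module.End.mul_apply, ih, hS', pow_succ', mul_assoc]
  refine ⟨S', ?_, ?_⟩
  · have hχm := S'.charpoly_monic
    have hχd : S'.charpoly.natDegree = m := S'.charpoly_natDegree
    have hχdeg : S'.charpoly.degree = (m : ℕ) := by
      rw [degree_eq_natDegree hχm.ne_zero, hχd]
    rw [← sub_eq_zero]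
    apply hinj
    · rw [← hχdeg]
      exact degree_sub_lt_left (by rw [hdeg, hχdeg]) hχm.ne_zero (by rw [hχm, hm])
    · rw [map_sub]
      have h1 := hae S'.charpoly 1
      have h2 := hΦh 1
      rw [LinearMap.aeval_self_charpoly, mul_one] at h1
      rw [mul_one] at h2
      rw [← h1, h2]; simp
  · intro v
    obtain ⟨p, rfl⟩ := hsurj v
    rw [hS']
    -- J (X p) = X J p + const
    set ρ := (p * c) %ₘ h with hρ
    have hρd : ρ.degree < h.degree := degree_modByMonic_lt _ hm
    have hm0 : p * c = ρ + h * J p := (modByMonic_add_div (p * c) h).symm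
    refine ⟨(X * ρ).coeff m, ?_⟩
    have hJX : J (X * p) = X * J p + C ((X * ρ).coeff m) := by
      refine huniq _ _ (X * ρ - h * C ((X * ρ).coeff m)) ?_ ?_
      · linear_combination - X * hm0
      · rw [hdeg, degree_lt_iff_coeff_zero]
        intro i hi
        rw [coeff_sub, coeff_mul_C]
        rcases hi.eq_or_lt with rfl | hi
        · have : h.coeff m = 1 := by rw [← hd]; exact hm
          rw [this]; simp
        · rw [coeff_eq_zero_of_natDegree_lt (p := h) (by omega)]
          obtain ⟨j, rfl⟩ : ∃ j, i = j + 1 := ⟨i - 1, by omega⟩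
          rw [coeff_X_mul]
          rw [hdeg, degree_lt_iff_coeff_zero] at hρd
          rw [hρd j (by omega)]; simp
    rw [hΦ, hJX, hΦ]
    simp

theorem heymann {F W V : Type*} [Field F] [AddCommGroup W] [Module F W] [Module.Finite F W]
    [AddCommGroup V] [Module F V] (π P : W →ₗ[F] V) (T₀ : W →ₗ[F] W) (hT₀ : π ∘ₗ T₀ = P)
    (b : W) (hb0 : b ≠ 0) :
    ∃ (T : Module.End F W) (L : Submodule F W), π ∘ₗ T = P ∧ L ≤ L.comap T ∧ LinearMap.ker π ≤ L ∧
      b ∈ L ∧ ∀ p : F[X], p.degree < (Module.finrank F L : ℕ) → aeval T p b = 0 → p = 0 := by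
  let Q : ℕ → Prop := fun m => ∃ T : Module.End F W, π ∘ₗ T = P ∧
    LinearIndependent F (fun i : Fin m => (T ^ (i : ℕ)) b)
  have hQ1 : Q 1 := ⟨T₀, hT₀, by
    rw [linearIndependent_unique_iff]; simpa using hb0⟩
  obtain ⟨m, ⟨T, hT, hLI⟩, hmax⟩ : ∃ m, Q (m + 1) ∧ ¬ Q (m + 2) := by
    by_contra! hcon
    have hall : ∀ m, Q (m + 1) := fun m => by
      induction m with
      | zero => exact hQ1
      | succ m ih => exact hcon m ih
    obtain ⟨T, -, hLI⟩ := hall (Module.finrank F W)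
    have := hLI.fintype_card_le_finrank
    simp at this
  have hsnoc : ∀ (T : Module.End F W) (n : ℕ), (fun i : Fin (n + 1) => (T ^ (i : ℕ)) b) =
      Fin.snoc (fun i : Fin n => (T ^ (i : ℕ)) b) ((T ^ n) b) := by
    intro T n
    ext i
    refine Fin.lastCases ?_ (fun j => ?_) i <;> simp
  set L := Submodule.span F (Set.range (fun i : Fin (m + 1) => (T ^ (i : ℕ)) b)) with hL
  have hmem : ∀ i, i < m + 1 → (T ^ i) b ∈ L := fun i hi =>
    Submodule.subset_span ⟨⟨i, hi⟩, rfl⟩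
  have hlast : (T ^ (m + 1)) b ∈ L := by
    by_contra hn
    exact hmax ⟨T, hT, by rw [hsnoc, linearIndependent_finSnoc]; exact ⟨hLI, hn⟩⟩
  refine ⟨T, L, hT, ?_, ?_, hmem 0 (by omega), ?_⟩
  · rw [hL, Submodule.span_le]
    rintro _ ⟨i, rfl⟩
    change T ((T ^ (i : ℕ)) b) ∈ L
    rw [← Module.End.mul_apply, ← pow_succ']
    rcases (show (i : ℕ) + 1 ≤ m + 1 by omega).eq_or_lt with h | h
    · rw [h]; exact hlast
    · exact hmem _ h
  · intro o ho
    by_contra hoL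
    have h1 := hLI
    rw [hsnoc, linearIndependent_finSnoc] at h1
    obtain ⟨ψ, hψ, hψ0⟩ := Submodule.exists_le_ker_of_notMem h1.2
    let T' : Module.End F W := T + ψ.smulRight o
    have hT' : ∀ v, T' v = T v + ψ v • o := fun v => rfl
    have hpow : ∀ i, i < m + 1 → (T' ^ i) b = (T ^ i) b := by
      intro i
      induction i with
      | zero => simp
      | succ i ih =>
        intro hi
        rw [pow_succ', pow_succ', Module.End.mul_apply, Module.End.mul_apply, ih (by omega), hT']
        have : ψ ((T ^ i) b) = 0 :=
          hψ0 (Submodule.subset_span ⟨⟨i, by omega⟩, rfl⟩)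
        rw [this]; simp
    refine hmax ⟨T', ?_, ?_⟩
    · ext v
      have : π (T v) = P v := LinearMap.congr_fun hT v
      simp [hT', this, LinearMap.mem_ker.1 ho]
    · rw [hsnoc, linearIndependent_finSnoc]
      have heq : (fun i : Fin (m + 1) => (T' ^ (i : ℕ)) b) = fun i : Fin (m + 1) => (T ^ (i : ℕ)) b := by
        ext i; exact hpow i i.2
      rw [heq]
      refine ⟨hLI, fun hn => hoL ?_⟩
      rw [pow_succ', Module.End.mul_apply, hpow m (by omega), hT', ← Module.End.mul_apply,
        ← pow_succ'] at hn
      have h2 := (Submodule.add_mem_iff_right _ hlast).1 hn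
      exact (Submodule.smul_mem_iff _ hψ).1 h2
  · have hfr : Module.finrank F L = m + 1 := by
      rw [hL, finrank_span_eq_card hLI]; simp
    intro p hp h0
    rw [hfr] at hp
    have hp' := (degree_lt_iff_coeff_zero _ _).1 hp
    by_cases hpz : p = 0
    · exact hpz
    have hnd : p.natDegree < m + 1 := by
      rw [degree_eq_natDegree hpz] at hp; exact_mod_cast hp
    rw [aeval_eq_sum_range' hnd, LinearMap.sum_apply, Finset.sum_range] at h0
    have := Fintype.linearIndependent_iff.1 hLI (fun i => p.coeff i) (by simpa using h0)
    ext i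
    by_cases hi : i < m + 1
    · simpa using this ⟨i, hi⟩
    · simpa using hp' i (by omega)


theorem abstract_completion {F W V : Type*} [Field F] [AddCommGroup W] [Module F W]
    [Module.Finite F W] [AddCommGroup V] [Module F V] (π P : W →ₗ[F] V) (σ : V →ₗ[F] W)
    (hσ : π ∘ₗ σ = LinearMap.id) (b : W) (hb : π b = 0) (hb0 : b ≠ 0) :
    ∃ (d : ℕ) (A : Matrix (Fin d) (Fin d) F) (q : V →ₗ[F] (Fin d → F)) (s : (Fin d → F) →ₗ[F] V),
      q ∘ₗ s = LinearMap.id ∧ q ∘ₗ P = Matrix.toLin' A ∘ₗ q ∘ₗ π ∧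
      ∀ f : F[X], f.Monic → f.natDegree = Module.finrank F W → A.charpoly ∣ f →
        ∃ T : Module.End F W, π ∘ₗ T = P ∧ T.charpoly = f := by
  have hσ' : ∀ v, π (σ v) = v := fun v => LinearMap.congr_fun hσ v
  obtain ⟨T, L, hT, hTL, hker, hbL, hcyc⟩ := heymann π P (σ ∘ₗ P)
    (by rw [← LinearMap.comp_assoc, hσ, LinearMap.id_comp]) b hb0
  have hT' : ∀ w, π (T w) = P w := fun v => LinearMap.congr_fun hT v
  let bQ := Module.finBasis F (W ⧸ L)
  let e := bQ.equivFun
  let A := LinearMap.toMatrix bQ bQ (L.mapQ L T hTL)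
  obtain ⟨τ, hτ⟩ := L.mkQ.exists_rightInverse_of_surjective (Submodule.range_mkQ L)
  have hτ' : ∀ v, L.mkQ (τ v) = v := fun v => LinearMap.congr_fun hτ v
  have hqπ : ∀ w, L.mkQ (σ (π w)) = L.mkQ w := by
    intro w
    rw [← sub_eq_zero, ← map_sub, ← LinearMap.mem_ker, Submodule.ker_mkQ]
    apply hker
    rw [LinearMap.mem_ker, map_sub, hσ', sub_self]
  refine ⟨_, A, e.toLinearMap ∘ₗ L.mkQ ∘ₗ σ, π ∘ₗ τ ∘ₗ e.symm.toLinearMap, ?_, ?_, ?_⟩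
  · apply LinearMap.ext
    intro v
    simp only [LinearMap.comp_apply, LinearEquiv.coe_coe, LinearMap.id_apply]
    rw [hqπ, hτ', LinearEquiv.apply_symm_apply]
  · apply LinearMap.ext
    intro w
    simp only [LinearMap.comp_apply, LinearEquiv.coe_coe]
    rw [hqπ, ← hT', hqπ, Matrix.toLin'_apply]
    change _ = A.mulVec (bQ.repr (L.mkQ w))
    rw [LinearMap.toMatrix_mulVec_repr]
    rfl
  · intro f hf hfd hdvd
    have hAc : A.charpoly = (L.mapQ L T hTL).charpoly := LinearMap.charpoly_toMatrix _ bQ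
    obtain ⟨h, rfl⟩ := hdvd
    have hAm : A.charpoly.Monic := A.charpoly_monic
    have hhm : h.Monic := hAm.of_mul_monic_left hf
    have hhd : h.natDegree = Module.finrank F L := by
      rw [hAm.natDegree_mul hhm, hAc, LinearMap.charpoly_natDegree] at hfd
      have := L.finrank_quotient_add_finrank
      omega
    have hco : ∀ (p : F[X]) (v : L), ((aeval (T.restrict hTL) p v : L) : W) = aeval T p (v : W) := by
      intro p v
      induction p using Polynomial.induction_on' with
      | add p q hp hq => simp [hp, hq]
      | monomial n a =>
        rw [aeval_monomial, aeval_monomial]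
        simp only [Module.End.mul_apply, Module.algebraMap_end_apply, Submodule.coe_smul]
        congr 1
        induction n with
        | zero => simp
        | succ n ih =>
          rw [pow_succ', pow_succ', Module.End.mul_apply, Module.End.mul_apply, ← ih]
          rfl
    obtain ⟨S', hS', hSb⟩ := placement (T.restrict hTL) ⟨b, hbL⟩ (by
      intro p hp h0
      apply hcyc p hp
      have := congrArg Subtype.val h0
      rw [hco] at this
      exact this) h hhm hhd
    obtain ⟨pr, hpr⟩ := L.subtype.exists_leftInverse_of_injective (Submodule.ker_subtype L)
    have hpr' : ∀ v : L, pr v = v := fun v => LinearMap.congr_fun hpr v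
    let T' : Module.End F W := T + L.subtype ∘ₗ (S' - T.restrict hTL) ∘ₗ pr
    have hTv : ∀ w, T' w = T w + ((S' (pr w) - (T.restrict hTL) (pr w) : L) : W) := fun w => rfl
    have hT'L : L ≤ L.comap T' := by
      intro w hw
      rw [Submodule.mem_comap, hTv]
      exact L.add_mem (hTL hw) (Submodule.coe_mem _)
    refine ⟨T', ?_, ?_⟩
    · apply LinearMap.ext
      intro w
      obtain ⟨t, ht⟩ := hSb (pr w)
      rw [LinearMap.comp_apply, hTv, ht, map_add, hT']
      simp [hb]
    · rw [charpoly_mul L T' hT'L, mul_comm, hAc, ← hS']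
      congr 2
      · apply LinearMap.ext
        intro w
        obtain ⟨w, rfl⟩ := L.mkQ_surjective w
        simp only [Submodule.mkQ_apply, Submodule.mapQ_apply]
        rw [hTv, Submodule.Quotient.mk_add, (Submodule.Quotient.mk_eq_zero L).2 (Submodule.coe_mem _),
          add_zero]
      · apply LinearMap.ext
        intro w
        apply Subtype.ext
        rw [LinearMap.restrict_apply]
        simp only [hTv, hpr', Submodule.coe_sub, LinearMap.restrict_apply]
        abel

end WimmerAux

/-- Wimmer's theorem. -/
theorem wimmer_charpoly_completion {F : Type*} [Field F] (n k : ℕ) (hk : 1 ≤ k) (hkn : k < n)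
    (A : Matrix (Fin k) (Fin k) F) (C : Matrix (Fin (n - k)) (Fin k) F)
    (f : Polynomial F) (hf : f.Monic) (hdeg : f.natDegree = n) :
    (∃ (B : Matrix (Fin k) (Fin (n - k)) F) (D : Matrix (Fin (n - k)) (Fin (n - k)) F),
        (Matrix.fromBlocks A B C D).charpoly = f) ↔
      ∀ g : Polynomial F,
        (∀ e : Fin k → (Fin k ⊕ Fin (n - k)), Function.Injective e →
          g ∣ ((xIminusAC A C).submatrix e id).det) → g ∣ f := by
  constructor
  · rintro ⟨B, D, rfl⟩ g hg
    rw [Matrix.charpoly, ← Matrix.det_reindex_self (finSumFinEquiv (m := k) (n := n - k))]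
    refine WimmerAux.laplace_dvd g k (n - k) _ fun e he => ?_
    have := hg (fun j => finSumFinEquiv.symm (e j)) (finSumFinEquiv.symm.injective.comp he)
    convert this using 2
    ext1 i j
    simp only [Matrix.submatrix_apply, Matrix.reindex_apply, id,
      finSumFinEquiv_symm_apply_castAdd, xIminusAC, Matrix.of_apply]
    rcases finSumFinEquiv.symm (e i) with a | a
    · by_cases h : a = j
      · subst h; simp
      · simp [Matrix.charmatrix_apply_ne, h]
    · simp
  · intro hyp
    have hr : 0 < n - k := by omega
    let π : (Fin k ⊕ Fin (n - k) → F) →ₗ[F] (Fin k → F) := LinearMap.funLeft F F Sum.inl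
    let PM : Matrix (Fin k) (Fin k ⊕ Fin (n - k)) F := Matrix.fromCols A.transpose C.transpose
    let πM : Matrix (Fin k) (Fin k ⊕ Fin (n - k)) F := Matrix.fromCols 1 0
    have hπM : LinearMap.toMatrix' π = πM := by
      ext i j
      rcases j with j | j <;>
        simp [LinearMap.toMatrix'_apply, π, πM, LinearMap.funLeft_apply, Matrix.one_apply,
          Pi.single_apply]
    obtain ⟨d, Q, q, s, hqs, hqP, hfin⟩ := WimmerAux.abstract_completion π (Matrix.toLin' PM)
      (LinearMap.pi (Sum.elim (fun i => LinearMap.proj i) (fun _ => 0)))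
      (by ext i j; simp [π, LinearMap.funLeft_apply])
      (Pi.single (Sum.inr ⟨0, hr⟩) 1) (by ext i; simp [π, LinearMap.funLeft_apply])
      (by simp)
    have hdvd : Q.charpoly ∣ f := by
      apply hyp
      intro e _
      rw [← Matrix.det_transpose]
      set qM := LinearMap.toMatrix' q with hqM
      set sM := LinearMap.toMatrix' s with hsM
      have h1 : qM * sM = 1 := by
        rw [hqM, hsM, ← LinearMap.toMatrix'_comp, hqs, LinearMap.toMatrix'_id]
      have h2 : qM * PM = Q * (qM * πM) := by
        have := congrArg LinearMap.toMatrix' hqP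
        rw [LinearMap.toMatrix'_comp, LinearMap.toMatrix'_comp, LinearMap.toMatrix'_comp,
          LinearMap.toMatrix'_toLin', LinearMap.toMatrix'_toLin', hπM] at this
        exact this
      let c : F →+* Polynomial F := Polynomial.C
      have hE : ((xIminusAC A C).submatrix e id).transpose =
          ((Polynomial.X : Polynomial F) • πM.map c - PM.map c).submatrix id e := by
        ext1 i j
        simp only [Matrix.transpose_apply, Matrix.submatrix_apply, xIminusAC, Matrix.of_apply, id,
          Matrix.sub_apply, Matrix.smul_apply, Matrix.map_apply, πM, PM]
        rcases e j with a | a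
        · by_cases h : a = i
          · subst h; simp [c]
          · simp [c, h, Matrix.one_apply, Ne.symm h]
        · simp [c]
      refine WimmerAux.det_dvd _ (qM.map c) (sM.map c) _
        (((qM * πM).map c).submatrix id e) ?_ ?_
      · rw [← Matrix.map_mul, h1]; simp
      · have h3 : qM.map c * ((Polynomial.X : Polynomial F) • πM.map c - PM.map c) =
            Q.charmatrix * (qM * πM).map c := by
          rw [Matrix.mul_sub, Matrix.mul_smul, ← Matrix.map_mul, ← Matrix.map_mul, h2,
            Matrix.charmatrix, Matrix.sub_mul, Matrix.map_mul (L := Q)]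
          congr 1
          ext1 i j
          simp [Matrix.scalar_apply, Matrix.diagonal_mul]
        rw [hE]
        ext1 i j
        have := congrFun (congrFun h3 i) (e j)
        simpa [Matrix.mul_apply] using this
    obtain ⟨T, hT, hTf⟩ := hfin f hf (by simp [hdeg]; omega) hdvd
    let M := (LinearMap.toMatrix' T).transpose
    have hM : M.charpoly = f := by
      rw [Matrix.charpoly_transpose, ← hTf, ← Matrix.charpoly_toLin', Matrix.toLin'_toMatrix']
    refine ⟨M.toBlocks₁₂, M.toBlocks₂₂, ?_⟩
    rw [← hM]
    congr 1
    have h1 : πM * LinearMap.toMatrix' T = PM := by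
      rw [← hπM, ← LinearMap.toMatrix'_comp, hT, LinearMap.toMatrix'_toLin']
    have h2 : ∀ i j, LinearMap.toMatrix' T (Sum.inl i) j = PM i j := by
      intro i j
      rw [← h1]
      simp [πM, Matrix.mul_apply, Matrix.one_apply]
    conv_rhs => rw [← Matrix.fromBlocks_toBlocks M]
    congr 1
    · ext i j
      simp [M, Matrix.toBlocks₁₁, h2, PM]
    · ext i j
      simp [M, Matrix.toBlocks₂₁, h2, PM]
end
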